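/- Assume b(x) > 0 for every x ∈ (B⁻¹, B), fix real numbers α and α₀ with α − α₀ > −2, set s = 2 + α − α₀, and assume K_j(α) > 0 and K_j(α₀) > 0 for every integer j ≥ 1. For an integer J ≥ 1, writing ρ_j = K_j(α₀)/K_j(α), u_j = K_{j,1}(α)/K_j(α) and v_j = K_{j,2}(α)/K_j(α), define Q_J(α) = [ (∑_{j=1}^{J} B^{2j} ρ_j (2 u_j² − v_j)) · (∑_{j=1}^{J} B^{2j} ρ_j) − (∑_{j=1}^{J} B^{2j} ρ_j u_j)² ] / (∑_{j=1}^{J} B^{2j} ρ_j)² + (∑_{j=1}^{J} B^{2j} (v_j − u_j²)) / (∑_{j=1}^{J} B^{2j}). Then lim_{J→∞} Q_J(α) = B^s (log B)²/(B^s − 1)², the limit being taken as the integer J tends to infinity. -/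

import Mathlib

/-!
Put `N = B ^ j`, `L = log B`, and write `l = N x` in the sums, so that `log l = j L + log x`.
Then `K_j(α) = N^{-α} M₀`, where `M₀` is a Riemann sum of mesh `1 / N` for `∫ 2 b(x)² x^{1-α} dx`
(up to a term of order `1 / N`). The ratios `u_j = -(j L + m_j)` and
`v_j = (j L)² + 2 j L m_j + w_j` involve the first two moments `m_j`, `w_j` of `log x` for the
normalised weights; `tendsto_riemann_sum` makes them converge, say to `m` and `w`. Likewise
`B^{2j} ρ_j = (B^s)^j r_j`, where `r_j` has a positive limit.

Writing `2 u_j² - v_j = (j L + m_j)² + (m_j² - w_j)`, the first quotient in `Q_J` is the variance of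
`j L + m_j` under the probability weights proportional to `(B^s)^j r_j` on `1 ≤ j ≤ J`, plus the
mean of `m_j² - w_j`. The latter tends to `m² - w` and is cancelled by the second quotient, a
weighted mean of `w_j - m_j²`. A variance is unchanged by a translation, so `j` may be replaced by
`j - J`; under the weights, `J - j` becomes geometric with ratio `q = B^{-s}` as `J → ∞`
(`tendsto_weighted_sum`, by dominated convergence), and since `m_j` converges, only the geometric
variance `q / (1 - q)² = B^s / (B^s - 1)²`, times `L²`, survives (`abstract_limit`).
-/

open Real Filter Topology

/-- `K_j(α) = B^{-2j} ∑_{l=1}^∞ b(l/B^j)² (2l+1) l^{-α}`. -/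
noncomputable def Kfun (B : ℝ) (b : ℝ → ℝ) (j : ℕ) (α : ℝ) : ℝ :=
  B ^ (-(2 * (j : ℝ))) *
    ∑' l : ℕ+, (b ((l : ℝ) / B ^ (j : ℕ))) ^ 2 * (2 * (l : ℝ) + 1) * (l : ℝ) ^ (-α)

/-- `K_{j,1}(α) = -B^{-2j} ∑_{l=1}^∞ b(l/B^j)² (2l+1) l^{-α} log l`. -/
noncomputable def Kfun1 (B : ℝ) (b : ℝ → ℝ) (j : ℕ) (α : ℝ) : ℝ :=
  -(B ^ (-(2 * (j : ℝ))) *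
    ∑' l : ℕ+, (b ((l : ℝ) / B ^ (j : ℕ))) ^ 2 * (2 * (l : ℝ) + 1) * (l : ℝ) ^ (-α) *
      Real.log (l : ℝ))

/-- `K_{j,2}(α) = B^{-2j} ∑_{l=1}^∞ b(l/B^j)² (2l+1) l^{-α} (log l)²`. -/
noncomputable def Kfun2 (B : ℝ) (b : ℝ → ℝ) (j : ℕ) (α : ℝ) : ℝ :=
  B ^ (-(2 * (j : ℝ))) *
    ∑' l : ℕ+, (b ((l : ℝ) / B ^ (j : ℕ))) ^ 2 * (2 * (l : ℝ) + 1) * (l : ℝ) ^ (-α) *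
      Real.log (l : ℝ) ^ 2

/-! ### Geometrically weighted means -/

lemma tsum_sq_geometric {q : ℝ} (hq : ‖q‖ < 1) :
    ∑' n : ℕ, (n : ℝ) ^ 2 * q ^ n = q * (1 + q) / (1 - q) ^ 3 := by
  have h0 := hasSum_choose_mul_geometric_of_norm_lt_one 0 hq
  have h1 := hasSum_choose_mul_geometric_of_norm_lt_one 1 hq
  have h2 := hasSum_choose_mul_geometric_of_norm_lt_one 2 hq
  have hne : 1 - q ≠ 0 := by
    rw [Real.norm_eq_abs, abs_lt] at hq
    linarith [hq.2]
  have h := ((h2.mul_left 2).sub (h1.mul_left 3)).add h0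
  have hval : q * (1 + q) / (1 - q) ^ 3 = 2 * (1 / (1 - q) ^ (2 + 1)) -
      3 * (1 / (1 - q) ^ (1 + 1)) + 1 / (1 - q) ^ (0 + 1) := by
    field_simp
    ring
  rw [hval, ← h.tsum_eq]
  refine tsum_congr fun n => ?_
  rw [Nat.cast_choose_two]
  push_cast [Nat.choose_one_right, Nat.choose_zero_right]
  ring

/-- Under the weights `a ^ j` on `1 ≤ j ≤ J`, normalised by the largest one, the `k`-th moment of the
distance `J - j` to the right end converges to that of the weights `a⁻¹ ^ n`, `n ≥ 0`, and a convergent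
factor `y j` may be replaced by its limit. -/
lemma tendsto_weighted_sum {a : ℝ} (ha : 1 < a) (k : ℕ) {y : ℕ → ℝ} {Y : ℝ}
    (hy : Tendsto y atTop (𝓝 Y)) :
    Tendsto (fun J : ℕ => (a ^ J)⁻¹ * ∑ j ∈ Finset.Icc 1 J, a ^ j * (y j * ((J : ℝ) - j) ^ k))
      atTop (𝓝 (Y * ∑' n : ℕ, (n : ℝ) ^ k * a⁻¹ ^ n)) := by
  have ha0 : 0 < a := by linarith
  obtain ⟨C, hC⟩ : ∃ C, ∀ n, ‖y n‖ ≤ C := by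
    obtain ⟨C, hC⟩ := isBounded_iff_forall_norm_le.1 (Metric.isBounded_range_of_tendsto y hy)
    exact ⟨C, fun n => hC _ ⟨n, rfl⟩⟩
  have hq : ‖a⁻¹‖ < 1 := by
    rw [Real.norm_of_nonneg (by positivity)]
    exact inv_lt_one_of_one_lt₀ ha
  have hsum := (summable_pow_mul_geometric_of_norm_lt_one k hq).mul_left C
  rw [← tsum_mul_left]
  have key := tendsto_tsum_of_dominated_convergence (𝓕 := atTop)
    (f := fun J n : ℕ => if n < J then y (J - n) * ((n : ℝ) ^ k * a⁻¹ ^ n) else 0)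
    (g := fun n : ℕ => Y * ((n : ℝ) ^ k * a⁻¹ ^ n)) hsum
    (by
      intro n
      have h1 : Tendsto (fun J : ℕ => y (J - n)) atTop (𝓝 Y) := hy.comp (tendsto_sub_atTop_nat n)
      refine (h1.mul_const ((n : ℝ) ^ k * a⁻¹ ^ n)).congr' ?_
      filter_upwards [eventually_gt_atTop n] with J hJ
      rw [if_pos hJ])
    (by
      refine Eventually.of_forall fun J n => ?_
      have hnn : 0 ≤ (n : ℝ) ^ k * a⁻¹ ^ n := by positivity
      split_ifs
      · rw [norm_mul, Real.norm_of_nonneg hnn]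
        exact mul_le_mul_of_nonneg_right (hC _) hnn
      · rw [norm_zero]
        exact mul_nonneg ((norm_nonneg _).trans (hC 0)) hnn)
  refine key.congr fun J => ?_
  rw [tsum_eq_sum (s := Finset.range J) (by
    intro n hn
    rw [if_neg (by simpa using hn)])]
  rw [Finset.mul_sum]
  refine Finset.sum_nbij' (fun n => J - n) (fun j => J - j) ?_ ?_ ?_ ?_ ?_
  · intro n hn
    simp only [Finset.mem_range, Finset.mem_Icc] at *
    omega
  · intro n hn
    simp only [Finset.mem_range, Finset.mem_Icc] at *
    omega
  · intro n hn
    simp only [Finset.mem_range] at *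
    omega
  · intro n hn
    simp only [Finset.mem_Icc] at *
    omega
  · intro n hn
    have hn' : n < J := by simpa using hn
    rw [if_pos hn', Nat.cast_sub hn'.le, pow_sub₀ _ ha0.ne' hn'.le, inv_pow]
    field_simp
    ring

/-- The limit for `u_j = -(j L + m j)` and `v_j = (j L)² + 2 j L m j + w j` with convergent `m`, `w`,
and first weights `a ^ j * r j`, where `r` has a nonzero limit. The base `c` of the second weights
and the limits of `r`, `m`, `w` do not enter the result. -/
lemma abstract_limit {a c L : ℝ} (ha : 1 < a) (hc : 1 < c) {r m w : ℕ → ℝ} {R M W : ℝ}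
    (hR : R ≠ 0) (hr : Tendsto r atTop (𝓝 R)) (hm : Tendsto m atTop (𝓝 M))
    (hw : Tendsto w atTop (𝓝 W)) :
    Tendsto (fun J : ℕ =>
      ((∑ j ∈ Finset.Icc 1 J, a ^ j * r j *
            (2 * (-((j : ℝ) * L + m j)) ^ 2 - (((j : ℝ) * L) ^ 2 + 2 * ((j : ℝ) * L) * m j + w j))) *
          (∑ j ∈ Finset.Icc 1 J, a ^ j * r j) -
        (∑ j ∈ Finset.Icc 1 J, a ^ j * r j * (-((j : ℝ) * L + m j))) ^ 2) /
        (∑ j ∈ Finset.Icc 1 J, a ^ j * r j) ^ 2 +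
      (∑ j ∈ Finset.Icc 1 J, c ^ j * (w j - m j ^ 2)) / (∑ j ∈ Finset.Icc 1 J, c ^ j))
      atTop (𝓝 (a * L ^ 2 / (a - 1) ^ 2)) := by
  have ha0 : 0 < a := by linarith
  have hc0 : 0 < c := by linarith
  have hinv : ∀ {z : ℝ}, 1 < z → ‖z⁻¹‖ < 1 := by
    intro z hz
    rw [Real.norm_of_nonneg (by positivity)]
    exact inv_lt_one_of_one_lt₀ hz
  have hS0 : ∀ {z : ℝ}, 1 < z → ∑' n : ℕ, (n : ℝ) ^ 0 * z⁻¹ ^ n = (1 - z⁻¹)⁻¹ := by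
    intro z hz
    simpa using tsum_geometric_of_norm_lt_one (hinv hz)
  have hS1 : ∑' n : ℕ, (n : ℝ) ^ 1 * a⁻¹ ^ n = a⁻¹ / (1 - a⁻¹) ^ 2 := by
    simpa using tsum_coe_mul_geometric_of_norm_lt_one (hinv ha)
  have hS2 := tsum_sq_geometric (hinv ha)
  have P0 := tendsto_weighted_sum ha 0 hr
  have X0 := tendsto_weighted_sum ha 0 (hr.mul (((hm.pow 2).const_mul 2).sub hw))
  have X1 := tendsto_weighted_sum ha 1 (hr.mul (hm.const_mul 2))
  have X2 := tendsto_weighted_sum ha 2 hr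
  have U0 := tendsto_weighted_sum ha 0 (hr.mul hm)
  have U1 := tendsto_weighted_sum ha 1 hr
  have D0 := tendsto_weighted_sum hc 0 (hw.sub (hm.pow 2))
  have E0 := tendsto_weighted_sum hc 0 (tendsto_const_nhds (x := (1 : ℝ)))
  rw [hS0 ha] at P0 X0 U0
  rw [hS0 hc] at D0 E0
  rw [hS1] at X1 U1
  rw [hS2] at X2
  have hca : 1 - a⁻¹ ≠ 0 := by
    have := inv_lt_one_of_one_lt₀ ha
    linarith
  have hcc : 1 - c⁻¹ ≠ 0 := by
    have := inv_lt_one_of_one_lt₀ hc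
    linarith
  have A := ((X2.const_mul (L ^ 2)).sub (X1.const_mul L)).add X0
  have U := U0.sub (U1.const_mul L)
  have T1 := ((A.mul P0).sub (U.pow 2)).div (P0.pow 2)
    (pow_ne_zero _ (mul_ne_zero hR (inv_ne_zero hca)))
  have T2 := D0.div E0 (mul_ne_zero one_ne_zero (inv_ne_zero hcc))
  have T := T1.add T2
  have hval : a * L ^ 2 / (a - 1) ^ 2 = (((L ^ 2 * (R * (a⁻¹ * (1 + a⁻¹) / (1 - a⁻¹) ^ 3)) -
      L * ((R * (2 * M)) * (a⁻¹ / (1 - a⁻¹) ^ 2)) + (R * (2 * M ^ 2 - W)) * (1 - a⁻¹)⁻¹) *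
      (R * (1 - a⁻¹)⁻¹) - ((R * M) * (1 - a⁻¹)⁻¹ - L * (R * (a⁻¹ / (1 - a⁻¹) ^ 2))) ^ 2) /
      (R * (1 - a⁻¹)⁻¹) ^ 2 + (W - M ^ 2) * (1 - c⁻¹)⁻¹ / (1 * (1 - c⁻¹)⁻¹)) := by
    have h1 : a * L ^ 2 / (a - 1) ^ 2 = a⁻¹ * L ^ 2 / (1 - a⁻¹) ^ 2 := by
      have : a - 1 ≠ 0 := by linarith
      have h2 : 1 - a⁻¹ = (a - 1) / a := by field_simp
      rw [h2]
      field_simp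
    rw [h1]
    have h3 : (W - M ^ 2) * (1 - c⁻¹)⁻¹ / (1 * (1 - c⁻¹)⁻¹) = W - M ^ 2 := by
      rw [one_mul, mul_div_cancel_right₀ _ (inv_ne_zero hcc)]
    rw [h3]
    clear * - hca hR
    generalize a⁻¹ = q at *
    field_simp
    ring
  rw [hval]
  refine T.congr fun J => ?_
  -- Recentre at `J`: write `j L = J L - (J - j) L`. The terms containing `J L` cancel between the
  -- two halves of the variance.
  have e1 : ∑ j ∈ Finset.Icc 1 J, a ^ j * r j *
      (2 * (-((j : ℝ) * L + m j)) ^ 2 - (((j : ℝ) * L) ^ 2 + 2 * ((j : ℝ) * L) * m j + w j)) =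
      (L ^ 2 * ∑ j ∈ Finset.Icc 1 J, a ^ j * (r j * ((J : ℝ) - j) ^ 2)
      - L * ∑ j ∈ Finset.Icc 1 J, a ^ j * (r j * (2 * m j) * ((J : ℝ) - j) ^ 1)
      + ∑ j ∈ Finset.Icc 1 J, a ^ j * (r j * (2 * m j ^ 2 - w j) * ((J : ℝ) - j) ^ 0))
      + 2 * (J * L) * (∑ j ∈ Finset.Icc 1 J, a ^ j * (r j * m j * ((J : ℝ) - j) ^ 0)
        - L * ∑ j ∈ Finset.Icc 1 J, a ^ j * (r j * ((J : ℝ) - j) ^ 1))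
      + (J * L) ^ 2 * ∑ j ∈ Finset.Icc 1 J, a ^ j * (r j * ((J : ℝ) - j) ^ 0) := by
    simp only [mul_sub (2 * ((J : ℝ) * L)), Finset.mul_sum, ← Finset.sum_add_distrib,
      ← Finset.sum_sub_distrib]
    exact Finset.sum_congr rfl fun j _ => by ring
  have e2 : ∑ j ∈ Finset.Icc 1 J, a ^ j * r j * (-((j : ℝ) * L + m j)) =
      -((J * L) * ∑ j ∈ Finset.Icc 1 J, a ^ j * (r j * ((J : ℝ) - j) ^ 0)
       + (∑ j ∈ Finset.Icc 1 J, a ^ j * (r j * m j * ((J : ℝ) - j) ^ 0)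
        - L * ∑ j ∈ Finset.Icc 1 J, a ^ j * (r j * ((J : ℝ) - j) ^ 1))) := by
    simp only [Finset.mul_sum, ← Finset.sum_add_distrib, ← Finset.sum_sub_distrib,
      ← Finset.sum_neg_distrib]
    exact Finset.sum_congr rfl fun j _ => by ring
  have e3 : ∑ j ∈ Finset.Icc 1 J, a ^ j * r j =
      ∑ j ∈ Finset.Icc 1 J, a ^ j * (r j * ((J : ℝ) - j) ^ 0) :=
    Finset.sum_congr rfl fun j _ => by ring
  have e4 : ∑ j ∈ Finset.Icc 1 J, c ^ j * (w j - m j ^ 2) =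
      ∑ j ∈ Finset.Icc 1 J, c ^ j * ((w j - m j ^ 2) * ((J : ℝ) - j) ^ 0) :=
    Finset.sum_congr rfl fun j _ => by ring
  have e5 : ∑ j ∈ Finset.Icc 1 J, c ^ j =
      ∑ j ∈ Finset.Icc 1 J, c ^ j * (1 * ((J : ℝ) - j) ^ 0) :=
    Finset.sum_congr rfl fun j _ => by ring
  rw [e1, e2, e3, e4, e5]
  have hz : (a ^ J)⁻¹ ≠ 0 := by positivity
  have hz' : (c ^ J)⁻¹ ≠ 0 := by positivity
  simp only [Pi.div_apply]
  congr 1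
  · clear * - hz
    generalize (∑ j ∈ Finset.Icc 1 J, a ^ j * (r j * ((J : ℝ) - j) ^ 2)) = t2
    generalize (∑ j ∈ Finset.Icc 1 J, a ^ j * (r j * (2 * m j) * ((J : ℝ) - j) ^ 1)) = x1
    generalize (∑ j ∈ Finset.Icc 1 J, a ^ j * (r j * (2 * m j ^ 2 - w j) * ((J : ℝ) - j) ^ 0)) = x0
    generalize (∑ j ∈ Finset.Icc 1 J, a ^ j * (r j * m j * ((J : ℝ) - j) ^ 0)) = y0
    generalize (∑ j ∈ Finset.Icc 1 J, a ^ j * (r j * ((J : ℝ) - j) ^ 1)) = y1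
    generalize (∑ j ∈ Finset.Icc 1 J, a ^ j * (r j * ((J : ℝ) - j) ^ 0)) = p
    generalize (a ^ J)⁻¹ = z at *
    rw [← mul_div_mul_left _ (p ^ 2) (pow_ne_zero 2 hz)]
    congr 1 <;> ring
  · exact mul_div_mul_left _ _ hz'

/-! ### Convergence of Riemann sums -/

/-- Riemann sums with real mesh `1 / N`: the sum is the integral of the step function
`x ↦ g (⌈x N⌉ / N)`, which converges to `g` pointwise and boundedly. -/
lemma tendsto_riemann_sum {B : ℝ} {g : ℝ → ℝ} (hg : Continuous g)
    (h0 : ∀ x ≤ 0, g x = 0) (h1 : ∀ x, B < x → g x = 0) :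
    Tendsto (fun N : ℝ => N⁻¹ * ∑' l : ℕ+, g ((l : ℝ) / N)) atTop (𝓝 (∫ x, g x)) := by
  have hcs : HasCompactSupport g := by
    refine HasCompactSupport.intro (isCompact_Icc (a := 0) (b := B)) fun x hx => ?_
    rw [Set.mem_Icc, not_and_or, not_le, not_le] at hx
    exact hx.elim (fun h => h0 x h.le) (h1 x)
  obtain ⟨C, hC⟩ := hg.bounded_above_of_compact_support hcs
  -- rounding up to the mesh `N⁻¹ ℤ` keeps both `{x ≤ 0}` and `{x > B}` invariant,
  -- so that `g` vanishes after rounding wherever `x` lies outside `[0, B]`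
  have hbound : ∀ N : ℝ, 0 < N → ∀ x : ℝ, ‖g ((⌈x * N⌉ : ℝ) / N)‖ ≤
      (Set.Icc 0 B).indicator (fun _ => C) x := by
    intro N hN x
    by_cases hx : x ∈ Set.Icc 0 B
    · rw [Set.indicator_of_mem hx]
      exact hC _
    · rw [Set.indicator_of_notMem hx]
      rw [Set.mem_Icc, not_and_or, not_le, not_le] at hx
      have : g ((⌈x * N⌉ : ℝ) / N) = 0 := by
        rcases hx with hx | hx
        · apply h0
          apply div_nonpos_of_nonpos_of_nonneg _ hN.le
          have : ⌈x * N⌉ ≤ 0 := Int.ceil_le.2 (by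
            push_cast
            exact mul_nonpos_of_nonpos_of_nonneg hx.le hN.le)
          exact_mod_cast this
        · apply h1
          rw [lt_div_iff₀ hN]
          exact (mul_lt_mul_of_pos_right hx hN).trans_le (Int.le_ceil _)
      rw [this, norm_zero]
  have hmeas : ∀ N : ℝ, Measurable fun x : ℝ => g ((⌈x * N⌉ : ℝ) / N) := by
    intro N
    have h : Measurable fun x : ℝ => ((⌈x * N⌉ : ℤ) : ℝ) :=
      measurable_from_top.comp (Int.measurable_ceil.comp (measurable_id.mul_const N))
    exact hg.measurable.comp (h.div_const N)
  have hint : MeasureTheory.Integrable ((Set.Icc 0 B).indicator (fun _ => C)) :=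
    (MeasureTheory.integrable_indicator_iff measurableSet_Icc).2
      (MeasureTheory.integrableOn_const (by simp))
  have key : Tendsto (fun N : ℝ => ∫ x : ℝ, g ((⌈x * N⌉ : ℝ) / N)) atTop (𝓝 (∫ x, g x)) := by
    refine MeasureTheory.tendsto_integral_filter_of_dominated_convergence
      ((Set.Icc 0 B).indicator (fun _ => C)) ?_ ?_ hint ?_
    · exact Eventually.of_forall fun N => (hmeas N).aestronglyMeasurable
    · filter_upwards [eventually_gt_atTop 0] with N hN
      exact Eventually.of_forall (hbound N hN)
    · refine Eventually.of_forall fun x => (hg.tendsto x).comp ?_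
      have hlim : Tendsto (fun N : ℝ => x + N⁻¹) atTop (𝓝 x) := by
        simpa using tendsto_const_nhds.add (tendsto_inv_atTop_zero (𝕜 := ℝ))
      refine tendsto_of_tendsto_of_tendsto_of_le_of_le' tendsto_const_nhds hlim ?_ ?_
      · filter_upwards [eventually_gt_atTop 0] with N hN
        rw [le_div_iff₀ hN]
        exact Int.le_ceil _
      · filter_upwards [eventually_gt_atTop 0] with N hN
        rw [div_le_iff₀ hN, add_mul, inv_mul_cancel₀ hN.ne']
        exact (Int.ceil_lt_add_one _).le
  refine key.congr' ?_
  filter_upwards [eventually_gt_atTop 0] with N hN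
  have hscale := MeasureTheory.Measure.integral_comp_mul_right (fun y : ℝ => g ((⌈y⌉ : ℝ) / N)) N
  rw [hscale, abs_of_pos (inv_pos.2 hN), smul_eq_mul]
  congr 1
  have hi : MeasureTheory.Integrable (fun y : ℝ => g ((⌈y⌉ : ℝ) / N)) := by
    rw [← MeasureTheory.integrable_comp_mul_right_iff _ hN.ne']
    exact hint.mono' (hmeas N).aestronglyMeasurable (Eventually.of_forall (hbound N hN))
  have hs := (hi.hasSum_intervalIntegral 0).tsum_eq
  rw [← hs]
  have hcell : ∀ n : ℤ, ∫ y in (0 + (n : ℝ))..(0 + n + 1), g ((⌈y⌉ : ℝ) / N) =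
      g (((n : ℝ) + 1) / N) := by
    intro n
    rw [zero_add, intervalIntegral.integral_of_le (by linarith)]
    rw [MeasureTheory.setIntegral_congr_fun (g := fun _ => g (((n : ℝ) + 1) / N))
      measurableSet_Ioc]
    · simp
    · intro y hy
      have : ⌈y⌉ = n + 1 := Int.ceil_eq_iff.2 ⟨by push_cast; linarith [hy.1], by push_cast; exact hy.2⟩
      simp only [this]
      push_cast
      rfl
  simp only [hcell]
  have hinj : Function.Injective (fun l : ℕ+ => ((l : ℕ) : ℤ) - 1) := by
    intro l l' h
    have : ((l : ℕ) : ℤ) = (l' : ℕ) := by simpa using h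
    exact_mod_cast this
  rw [← hinj.tsum_eq]
  · refine tsum_congr fun l => ?_
    push_cast
    congr 2
    ring
  · intro n hn
    rw [Function.mem_support] at hn
    have hpos : 0 ≤ n := by
      by_contra hneg
      refine hn (h0 _ (div_nonpos_of_nonpos_of_nonneg ?_ hN.le))
      have : n + 1 ≤ 0 := by omega
      exact_mod_cast this
    refine ⟨⟨(n + 1).toNat, by omega⟩, ?_⟩
    simp
    omega

/-! ### Moments of the window -/

/-- The sums over `l` are finite, since the window cuts them off at `l ≤ B N`. -/
lemma summable_window {B N : ℝ} (hN : 0 < N) {g : ℝ → ℝ} (h1 : ∀ x, B < x → g x = 0)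
    (F : ℝ → ℝ) : Summable fun l : ℕ+ => g ((l : ℝ) / N) * F l := by
  refine summable_of_hasFiniteSupport ?_
  refine (Set.finite_Iic (Nat.succPNat ⌈B * N⌉₊)).subset fun l hl => ?_
  rw [Set.mem_Iic, ← PNat.coe_le_coe]
  by_contra hcon
  push Not at hcon
  refine hl ?_
  have h2 : (⌈B * N⌉₊ : ℝ) < (l : ℕ) := by
    have : ⌈B * N⌉₊ < (l : ℕ) := by
      rw [Nat.succPNat_coe] at hcon
      omega
    exact_mod_cast this
  have : g ((l : ℝ) / N) = 0 := h1 _ (by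
    rw [lt_div_iff₀ hN]
    exact (Nat.le_ceil _).trans_lt h2)
  simp [this]

/-- The squared window is zero near `(-∞, 0]`, which removes the singularities of powers and
logarithms at the origin. -/
lemma continuous_window_mul {B : ℝ} (hB : 1 < B) {b : ℝ → ℝ} (hb : Continuous b)
    (hsupp : Function.support b ⊆ Set.Icc B⁻¹ B) {f : ℝ → ℝ}
    (hf : ∀ x, 0 < x → ContinuousAt f x) : Continuous fun x => b x ^ 2 * f x := by
  have hB0 : 0 < B⁻¹ := by positivity
  rw [continuous_iff_continuousAt]
  intro x
  rcases lt_or_ge 0 x with hx | hx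
  · exact (hb.continuousAt.pow 2).mul (hf x hx)
  · have : (fun x => b x ^ 2 * f x) =ᶠ[𝓝 x] fun _ => 0 := by
      filter_upwards [Iio_mem_nhds (hx.trans_lt hB0)] with y hy
      have : b y = 0 := by
        by_contra h
        exact absurd (hsupp h).1 (not_le.2 hy)
      simp [this]
    exact continuousAt_const.congr this.symm

/-- The `k`-th logarithmic moment of the window at scale `N`: the sum over `l ≥ 1` of the rescaled
weight `N⁻¹ b(x)² (2x + 1/N) x^{-α}` times `(log x)^k`, at the mesh points `x = l / N`. -/
noncomputable def scaledMoment (b : ℝ → ℝ) (α : ℝ) (k : ℕ) (N : ℝ) : ℝ :=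
  N⁻¹ * ∑' l : ℕ+, b ((l : ℝ) / N) ^ 2 * ((2 * ((l : ℝ) / N) + N⁻¹) * ((l : ℝ) / N) ^ (-α) *
    log ((l : ℝ) / N) ^ k)

/-- The summand `N⁻¹` in the weight contributes `N⁻¹` times a bounded Riemann sum. -/
lemma tendsto_scaledMoment {B : ℝ} (hB : 1 < B) {b : ℝ → ℝ} (hb : Continuous b)
    (hsupp : Function.support b ⊆ Set.Icc B⁻¹ B) (α : ℝ) (k : ℕ) :
    Tendsto (scaledMoment b α k) atTop
      (𝓝 (∫ x, b x ^ 2 * (2 * x * x ^ (-α) * log x ^ k))) := by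
  have hB0 : 0 < B⁻¹ := by positivity
  have hneg : ∀ x ≤ 0, b x = 0 := fun x hx => by
    by_contra h
    exact absurd (hsupp h).1 (not_le.2 (hx.trans_lt hB0))
  have hbig : ∀ x, B < x → b x = 0 := fun x hx => by
    by_contra h
    exact absurd (hsupp h).2 (not_le.2 hx)
  have hcont : ∀ x : ℝ, 0 < x → ContinuousAt (fun x : ℝ => x ^ (-α) * log x ^ k) x := fun x hx =>
    (continuousAt_rpow_const x (-α) (Or.inl hx.ne')).mul ((continuousAt_log hx.ne').pow k)
  have c1 : Continuous fun x => b x ^ 2 * (2 * x * x ^ (-α) * log x ^ k) := by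
    refine continuous_window_mul hB hb hsupp fun x hx => ?_
    have h2x : ContinuousAt (fun x : ℝ => 2 * x) x := by fun_prop
    refine (h2x.mul (hcont x hx)).congr (Eventually.of_forall fun y => ?_)
    simp only [Pi.mul_apply, mul_assoc]
  have c2 : Continuous fun x => b x ^ 2 * (x ^ (-α) * log x ^ k) :=
    continuous_window_mul hB hb hsupp hcont
  have t1 := tendsto_riemann_sum (B := B) c1 (fun x hx => by simp [hneg x hx])
    (fun x hx => by simp [hbig x hx])
  have t2 := tendsto_riemann_sum (B := B) c2 (fun x hx => by simp [hneg x hx])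
    (fun x hx => by simp [hbig x hx])
  have t := t1.add ((tendsto_inv_atTop_zero (𝕜 := ℝ)).mul t2)
  rw [zero_mul, add_zero] at t
  refine t.congr' ?_
  filter_upwards [eventually_gt_atTop 0] with N hN
  have hbig2 : ∀ x, B < x → b x ^ 2 = 0 := fun x hx => by simp [hbig x hx]
  have s1 := summable_window hN hbig2 fun l => 2 * (l / N) * (l / N) ^ (-α) * log (l / N) ^ k
  have s2 := summable_window hN hbig2 fun l => (l / N) ^ (-α) * log (l / N) ^ k
  rw [scaledMoment, mul_left_comm, ← mul_add, ← tsum_mul_left, ← s1.tsum_add (s2.mul_left _)]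
  congr 1
  exact tsum_congr fun l => by ring

/-- Substituting `l = N x` with `N = B ^ j`, so that `log l = j log B + log x`, expresses
`K_j`, `K_{j,1}`, `K_{j,2}` through the moments of `log x`. -/
lemma Kfun_eq_scaledMoment {B : ℝ} (hB : 1 < B) {b : ℝ → ℝ}
    (hsupp : Function.support b ⊆ Set.Icc B⁻¹ B) (α : ℝ) (j : ℕ) :
    Kfun B b j α = (B ^ j) ^ (-α) * scaledMoment b α 0 (B ^ j) ∧
    Kfun1 B b j α = (B ^ j) ^ (-α) *
      (-(j * log B * scaledMoment b α 0 (B ^ j) + scaledMoment b α 1 (B ^ j))) ∧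
    Kfun2 B b j α = (B ^ j) ^ (-α) * ((j * log B) ^ 2 * scaledMoment b α 0 (B ^ j) +
      2 * (j * log B) * scaledMoment b α 1 (B ^ j) + scaledMoment b α 2 (B ^ j)) := by
  have hB0 : 0 < B := by linarith
  have hpow : B ^ (-(2 * (j : ℝ))) = (B ^ j)⁻¹ * (B ^ j)⁻¹ := by
    rw [rpow_neg hB0.le, two_mul, rpow_add hB0, rpow_natCast, mul_inv]
  have hlogN : (j : ℝ) * log B = log (B ^ j) := by rw [log_pow]
  have hN : 0 < B ^ j := by positivity
  unfold Kfun Kfun1 Kfun2 scaledMoment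
  rw [hpow, hlogN]
  generalize B ^ j = N at *
  have hbig2 : ∀ x, B < x → b x ^ 2 = 0 := fun x hx => by
    have : b x = 0 := by
      by_contra h
      exact absurd (hsupp h).2 (not_le.2 hx)
    simp [this]
  have hs : ∀ k : ℕ, Summable fun l : ℕ+ => b ((l : ℝ) / N) ^ 2 *
      ((2 * ((l : ℝ) / N) + N⁻¹) * ((l : ℝ) / N) ^ (-α) * log ((l : ℝ) / N) ^ k) := fun k =>
    summable_window hN hbig2 fun l => (2 * (l / N) + N⁻¹) * (l / N) ^ (-α) * log (l / N) ^ k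
  have hl : ∀ l : ℕ+, (0 : ℝ) < (l : ℝ) := fun l => by exact_mod_cast l.pos
  have hrp : ∀ l : ℕ+, (l : ℝ) ^ (-α) = N ^ (-α) * ((l : ℝ) / N) ^ (-α) := fun l => by
    rw [← mul_rpow hN.le (div_pos (hl l) hN).le, mul_div_cancel₀ _ hN.ne']
  have hlog : ∀ l : ℕ+, log (l : ℝ) = log N + log ((l : ℝ) / N) := fun l => by
    rw [log_div (hl l).ne' hN.ne']
    ring
  have hlin : ∀ l : ℕ+, 2 * (l : ℝ) + 1 = N * (2 * ((l : ℝ) / N) + N⁻¹) := fun l => by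
    field_simp
  choose S hS using hs
  have E0 := ((hS 0).mul_left (N * N ^ (-α))).tsum_eq
  have E1 := ((((hS 0).mul_left (log N)).add (hS 1)).mul_left (N * N ^ (-α))).tsum_eq
  have E2 := (((((hS 0).mul_left (log N ^ 2)).add ((hS 1).mul_left (2 * log N))).add
    (hS 2)).mul_left (N * N ^ (-α))).tsum_eq
  have F0 := (tsum_congr fun l : ℕ+ => show b ((l : ℝ) / N) ^ 2 * (2 * (l : ℝ) + 1) *
      (l : ℝ) ^ (-α) = _ by rw [hrp, hlin]; ring).trans E0
  have F1 := (tsum_congr fun l : ℕ+ => show b ((l : ℝ) / N) ^ 2 * (2 * (l : ℝ) + 1) *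
      (l : ℝ) ^ (-α) * log (l : ℝ) = _ by rw [hrp, hlin, hlog]; ring).trans E1
  have F2 := (tsum_congr fun l : ℕ+ => show b ((l : ℝ) / N) ^ 2 * (2 * (l : ℝ) + 1) *
      (l : ℝ) ^ (-α) * log (l : ℝ) ^ 2 = _ by rw [hrp, hlin, hlog]; ring).trans E2
  rw [F0, F1, F2, (hS 0).tsum_eq, (hS 1).tsum_eq, (hS 2).tsum_eq]
  refine ⟨?_, ?_, ?_⟩ <;> field_simp

lemma limit_moment_pos {B : ℝ} (hB : 1 < B) {b : ℝ → ℝ} (hb : Continuous b)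
    (hsupp : Function.support b ⊆ Set.Icc B⁻¹ B) (hbpos : ∀ x ∈ Set.Ioo B⁻¹ B, 0 < b x) (α : ℝ) :
    0 < ∫ x, b x ^ 2 * (2 * x * x ^ (-α) * log x ^ 0) := by
  have hB0 : 0 < B⁻¹ := by positivity
  have hzero : ∀ x, x ∉ Set.Icc B⁻¹ B → b x = 0 := fun x hx => by
    by_contra h
    exact hx (hsupp h)
  refine Continuous.integral_pos_of_hasCompactSupport_nonneg_nonzero (x := 1) ?_ ?_ ?_ ?_
  · refine continuous_window_mul hB hb hsupp fun x hx => ?_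
    simp only [pow_zero, mul_one]
    exact ContinuousAt.mul (by fun_prop) (continuousAt_rpow_const x (-α) (Or.inl hx.ne'))
  · exact HasCompactSupport.intro (isCompact_Icc (a := B⁻¹) (b := B)) fun x hx => by
      simp [hzero x hx]
  · intro x
    by_cases hx : x ∈ Set.Icc B⁻¹ B
    · have : 0 < x := hB0.trans_le hx.1
      simp only [Pi.zero_apply]
      positivity
    · simp [hzero x hx]
  · have := hbpos 1 ⟨inv_lt_one_of_one_lt₀ hB, hB⟩
    simp [this.ne']

/-! ### The limit -/

theorem Q_limit (B : ℝ) (hB : 1 < B) (b : ℝ → ℝ) (hb : Continuous b)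
    (hsupp : Function.support b ⊆ Set.Icc B⁻¹ B)
    (hbpos : ∀ x ∈ Set.Ioo B⁻¹ B, 0 < b x)
    (α α₀ : ℝ) (hdiff : -2 < α - α₀)
    (hK : ∀ j : ℕ, 1 ≤ j → 0 < Kfun B b j α)
    (hK0 : ∀ j : ℕ, 1 ≤ j → 0 < Kfun B b j α₀) :
    Tendsto (fun J : ℕ =>
      ((∑ j ∈ Finset.Icc 1 J, B ^ (2 * (j : ℝ)) * (Kfun B b j α₀ / Kfun B b j α) *
            (2 * (Kfun1 B b j α / Kfun B b j α) ^ 2 - Kfun2 B b j α / Kfun B b j α)) *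
          (∑ j ∈ Finset.Icc 1 J, B ^ (2 * (j : ℝ)) * (Kfun B b j α₀ / Kfun B b j α)) -
        (∑ j ∈ Finset.Icc 1 J, B ^ (2 * (j : ℝ)) * (Kfun B b j α₀ / Kfun B b j α) *
            (Kfun1 B b j α / Kfun B b j α)) ^ 2) /
        (∑ j ∈ Finset.Icc 1 J, B ^ (2 * (j : ℝ)) * (Kfun B b j α₀ / Kfun B b j α)) ^ 2 +
      (∑ j ∈ Finset.Icc 1 J, B ^ (2 * (j : ℝ)) *
          (Kfun2 B b j α / Kfun B b j α - (Kfun1 B b j α / Kfun B b j α) ^ 2)) /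
        (∑ j ∈ Finset.Icc 1 J, B ^ (2 * (j : ℝ))))
      atTop
      (𝓝 (B ^ (2 + α - α₀) * Real.log B ^ 2 / (B ^ (2 + α - α₀) - 1) ^ 2)) := by
  have hB0 : 0 < B := by linarith
  have hN : Tendsto (fun j : ℕ => B ^ j) atTop atTop := tendsto_pow_atTop_atTop_of_one_lt hB
  have T := fun (β : ℝ) (k : ℕ) => (tendsto_scaledMoment hB hb hsupp β k).comp hN
  have hI := limit_moment_pos hB hb hsupp hbpos α
  have hI0 := limit_moment_pos hB hb hsupp hbpos α₀
  have hr := (T α₀ 0).div (T α 0) hI.ne'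
  have hm := (T α 1).div (T α 0) hI.ne'
  have hw := (T α 2).div (T α 0) hI.ne'
  have ha : 1 < B ^ (2 + α - α₀) := one_lt_rpow hB (by linarith)
  have hc : 1 < B ^ 2 := one_lt_pow₀ hB two_ne_zero
  have key := abstract_limit (L := log B) ha hc (div_pos hI0 hI).ne' hr hm hw
  simp only [Pi.div_apply, Function.comp_apply] at key
  have hM : ∀ j : ℕ, 1 ≤ j → scaledMoment b α 0 (B ^ j) ≠ 0 := fun j hj h => by
    have := hK j hj
    rw [(Kfun_eq_scaledMoment hB hsupp α j).1, h, mul_zero] at this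
    exact this.false
  have hNα : ∀ j : ℕ, (B ^ j : ℝ) ^ (-α) ≠ 0 := fun j => by positivity
  have hc_eq : ∀ j : ℕ, B ^ (2 * (j : ℝ)) = (B ^ 2) ^ j := fun j => by
    rw [← pow_mul, ← rpow_natCast]
    push_cast
    rfl
  have hu : ∀ j : ℕ, 1 ≤ j → Kfun1 B b j α / Kfun B b j α =
      -((j : ℝ) * log B + scaledMoment b α 1 (B ^ j) / scaledMoment b α 0 (B ^ j)) := by
    intro j hj
    obtain ⟨e0, e1, -⟩ := Kfun_eq_scaledMoment hB hsupp α j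
    rw [e0, e1, mul_div_mul_left _ _ (hNα j)]
    have := hM j hj
    field_simp
  have hv : ∀ j : ℕ, 1 ≤ j → Kfun2 B b j α / Kfun B b j α = ((j : ℝ) * log B) ^ 2 +
      2 * ((j : ℝ) * log B) * (scaledMoment b α 1 (B ^ j) / scaledMoment b α 0 (B ^ j)) +
      scaledMoment b α 2 (B ^ j) / scaledMoment b α 0 (B ^ j) := by
    intro j hj
    obtain ⟨e0, -, e2⟩ := Kfun_eq_scaledMoment hB hsupp α j
    rw [e0, e2, mul_div_mul_left _ _ (hNα j)]
    have := hM j hj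
    field_simp
  have hp : ∀ j : ℕ, B ^ (2 * (j : ℝ)) * (Kfun B b j α₀ / Kfun B b j α) =
      (B ^ (2 + α - α₀)) ^ j *
        (scaledMoment b α₀ 0 (B ^ j) / scaledMoment b α 0 (B ^ j)) := by
    intro j
    rw [(Kfun_eq_scaledMoment hB hsupp α j).1, (Kfun_eq_scaledMoment hB hsupp α₀ j).1,
      mul_div_mul_comm, ← mul_assoc]
    congr 1
    rw [← rpow_natCast B j, ← rpow_mul hB0.le, ← rpow_mul hB0.le, ← rpow_sub hB0,
      ← rpow_add hB0, ← rpow_natCast, ← rpow_mul hB0.le]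
    congr 1
    ring
  refine key.congr fun J => ?_
  have f1 : ∀ {f g : ℕ → ℝ}, (∀ j, 1 ≤ j → f j = g j) →
      ∑ j ∈ Finset.Icc 1 J, f j = ∑ j ∈ Finset.Icc 1 J, g j := fun h =>
    Finset.sum_congr rfl fun j hj => h j (Finset.mem_Icc.1 hj).1
  congr 1
  · congr 1
    · congr 1
      · congr 1
        · exact f1 fun j hj => by rw [hp, hu j hj, hv j hj]
        · exact f1 fun j hj => by rw [hp]
      · congr 1
        exact f1 fun j hj => by rw [hp, hu j hj]
    · congr 1
      exact f1 fun j hj => by rw [hp]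
  · congr 1
    · refine f1 fun j hj => ?_
      rw [hc_eq, hu j hj, hv j hj]
      ring
    · exact f1 fun j hj => by rw [hc_eq]
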